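/- arXiv:1711.10889 — 3 statements merged into one kernel-verified Lean document; each statement's English description precedes it below -/
import Mathlib

section
/- Let E be a unital idempotent CPTP map on d×d complex matrices, let a ∈ (0,1)∪(1,2], and let ρ be a positive definite density matrix. Then the infimum over all positive definite density matrices σ with E(σ) = σ of the Tsallis-based relative entropy S̃_a(ρ|σ) equals (Tr((E(ρ^a))^{1/a}) − 1)/(a − 1), and it is attained at σ = (E(ρ^a))^{1/a} / Tr((E(ρ^a))^{1/a}). -/
open Matrix
open scoped ComplexOrder

/-- Matrix power `A ^ t` for real `t`, via the continuous functional calculus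
(applying `x ↦ x ^ t` to the eigenvalues of a Hermitian matrix `A`). -/
noncomputable def mpow {d : ℕ} (A : Matrix (Fin d) (Fin d) ℂ) (t : ℝ) :
    Matrix (Fin d) (Fin d) ℂ :=
  cfc (fun x : ℝ => x ^ t) A

/-- The Tsallis-based relative entropy
`S̃_a(ρ|σ) = ((Tr (ρ^a σ^(1-a)))^(1/a) - 1) / (a - 1)`. -/
noncomputable def tsallis {d : ℕ} (a : ℝ) (ρ σ : Matrix (Fin d) (Fin d) ℂ) : ℝ :=
  ((((mpow ρ a * mpow σ (1 - a)).trace).re) ^ (1 / a) - 1) / (a - 1)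

/-!
Let `ω = (E (ρ ^ a)) ^ (1 / a)`, `N = Tr ω` and `τ = N⁻¹ • ω`. The fixed points of a unital
trace-preserving `E` are the matrices commuting with its Kraus operators: if `E X = X`, the positive
matrices `[K i, X] * [K i, X]ᴴ` add up to `E (X * Xᴴ) - X * Xᴴ`, which has trace zero. The fixed
points are therefore stable under functional calculus, and
`Tr (X σ ^ (1 - a)) = Tr (E X σ ^ (1 - a))` whenever `E σ = σ`. Taking `X = ρ ^ a` gives
`Tr (ρ ^ a σ ^ (1 - a)) = Tr (ω ^ a σ ^ (1 - a))`, hence the Pythagorean identity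
`S̃_a(ρ|σ) = S̃_a(N • τ|σ) = (N - 1) / (a - 1) + N * S̃_a(τ|σ)`. Since the relative entropy of two
states is nonnegative, by Young's inequality for the trace, and vanishes when they coincide, the
minimum is attained at `σ = τ`, which is itself fixed by `E`.
-/

section Klein

variable {𝕜 n ι : Type*} [RCLike 𝕜] [Fintype n] [DecidableEq n] {A B : Matrix n n 𝕜}

lemma trace_diagonal_mul_mul_diagonal_mul_conjTranspose (v w : n → ℝ) (W : Matrix n n 𝕜) :
    (diagonal (fun i => (v i : 𝕜)) * W * (diagonal (fun j => (w j : 𝕜)) * Wᴴ)).trace =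
      ∑ i, ∑ j, ((v i * w j * ‖W i j‖ ^ 2 : ℝ) : 𝕜) := by
  refine Finset.sum_congr rfl fun i _ => ?_
  rw [diag_apply, mul_apply]
  refine Finset.sum_congr rfl fun j _ => ?_
  rw [diagonal_mul, diagonal_mul, conjTranspose_apply, ← starRingEnd_apply]
  push_cast
  rw [← RCLike.mul_conj]
  ring

lemma trace_cfc_mul_cfc (hA : A.IsHermitian) (hB : B.IsHermitian) (f g : ℝ → ℝ) :
    (cfc f A * cfc g B).trace = ∑ i, ∑ j, ((f (hA.eigenvalues i) * g (hB.eigenvalues j) *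
      ‖((hA.eigenvectorUnitary : Matrix n n 𝕜)ᴴ * hB.eigenvectorUnitary) i j‖ ^ 2 : ℝ) : 𝕜) := by
  rw [← trace_diagonal_mul_mul_diagonal_mul_conjTranspose, hA.cfc_eq, hB.cfc_eq, IsHermitian.cfc,
    IsHermitian.cfc, Unitary.conjStarAlgAut_apply, Unitary.conjStarAlgAut_apply,
    conjTranspose_mul, conjTranspose_conjTranspose]
  simp only [star_eq_conjTranspose, Matrix.mul_assoc]
  rw [trace_mul_comm]
  simp only [Matrix.mul_assoc]
  rfl

/-- Klein's inequality. -/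
theorem sum_smul_trace_cfc_mul_cfc_nonneg (hA : A.IsHermitian) (hB : B.IsHermitian) (s : Finset ι)
    (c : ι → ℝ) (f g : ι → ℝ → ℝ)
    (h : ∀ x ∈ spectrum ℝ A, ∀ y ∈ spectrum ℝ B, 0 ≤ ∑ k ∈ s, c k * (f k x * g k y)) :
    0 ≤ ∑ k ∈ s, (c k : 𝕜) * (cfc (f k) A * cfc (g k) B).trace := by
  have expand : ∑ k ∈ s, (c k : 𝕜) * (cfc (f k) A * cfc (g k) B).trace =
      ∑ i, ∑ j, (((∑ k ∈ s, c k * (f k (hA.eigenvalues i) * g k (hB.eigenvalues j))) *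
        ‖((hA.eigenvectorUnitary : Matrix n n 𝕜)ᴴ * hB.eigenvectorUnitary) i j‖ ^ 2 : ℝ) : 𝕜) := by
    simp only [trace_cfc_mul_cfc hA hB, Finset.mul_sum]
    rw [Finset.sum_comm]
    refine Finset.sum_congr rfl fun i _ => ?_
    rw [Finset.sum_comm]
    refine Finset.sum_congr rfl fun j _ => ?_
    push_cast [Finset.sum_mul]
    exact Finset.sum_congr rfl fun k _ => by ring
  rw [expand]
  refine Finset.sum_nonneg fun i _ => Finset.sum_nonneg fun j _ => RCLike.ofReal_nonneg.mpr ?_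
  exact mul_nonneg (h _ (hA.eigenvalues_mem_spectrum_real i) _ (hB.eigenvalues_mem_spectrum_real j))
    (sq_nonneg _)

end Klein

section Young

variable {d : ℕ} {A B : Matrix (Fin d) (Fin d) ℂ} {a : ℝ}

lemma weighted_arith_mean_le_geom_mean_of_one_le {x y : ℝ} (ha : 1 ≤ a) (hx : 0 ≤ x)
    (hy : 0 < y) : a * x + (1 - a) * y ≤ x ^ a * y ^ (1 - a) := by
  have ha₀ : 0 < a := one_pos.trans_le ha
  have eq_geom_mean : x = (x ^ a * y ^ (1 - a)) ^ a⁻¹ * y ^ (1 - a⁻¹) := by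
    have exponent : (1 - a) * a⁻¹ + (1 - a⁻¹) = 0 := by field_simp; ring
    rw [Real.mul_rpow (by positivity) (by positivity), Real.rpow_rpow_inv hx ha₀.ne',
      ← Real.rpow_mul hy.le, mul_assoc, ← Real.rpow_add hy, exponent, Real.rpow_zero, mul_one]
  have amgm : x ≤ a⁻¹ * (x ^ a * y ^ (1 - a)) + (1 - a⁻¹) * y := by
    conv_lhs => rw [eq_geom_mean]
    exact Real.geom_mean_le_arith_mean2_weighted (by positivity)
      (sub_nonneg.mpr (inv_le_one_of_one_le₀ ha)) (by positivity) hy.le (by ring)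
  calc a * x + (1 - a) * y
      ≤ a * (a⁻¹ * (x ^ a * y ^ (1 - a)) + (1 - a⁻¹) * y) + (1 - a) * y := by gcongr
    _ = x ^ a * y ^ (1 - a) := by field_simp; ring

open scoped MatrixOrder in
lemma trace_mpow_mul_mpow_nonneg (hA : A.PosSemidef) (hB : B.PosSemidef) (s t : ℝ) :
    0 ≤ (mpow A s * mpow B t).trace := by
  have klein := sum_smul_trace_cfc_mul_cfc_nonneg hA.1 hB.1 {()} (fun _ => 1)
    (fun _ x => x ^ s) (fun _ y => y ^ t) fun x hx y hy => by
      have hx₀ : 0 ≤ x := spectrum_nonneg_of_nonneg hA.nonneg hx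
      have hy₀ : 0 ≤ y := spectrum_nonneg_of_nonneg hB.nonneg hy
      rw [Finset.sum_singleton]
      positivity
  simpa [mpow] using klein

lemma mul_trace_young_gap_nonneg (hA : A.IsHermitian) (hB : B.IsHermitian) (c : ℝ)
    (h : ∀ x ∈ spectrum ℝ A, ∀ y ∈ spectrum ℝ B,
      0 ≤ c * (a * x + (1 - a) * y - x ^ a * y ^ (1 - a))) :
    0 ≤ (c : ℂ) * (a * A.trace + (1 - a) * B.trace - (mpow A a * mpow B (1 - a)).trace) := by
  have klein := sum_smul_trace_cfc_mul_cfc_nonneg hA hB Finset.univ ![c * a, c * (1 - a), -c]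
    ![fun x => x, fun _ => 1, fun x => x ^ a] ![fun _ => 1, fun y => y, fun y => y ^ (1 - a)]
    fun x hx y hy => by
      simp only [Fin.sum_univ_three, Matrix.cons_val]
      linarith [h x hx y hy]
  simp only [Fin.sum_univ_three, Matrix.cons_val, cfc_id' ℝ A hA.isSelfAdjoint,
    cfc_id' ℝ B hB.isSelfAdjoint, cfc_const_one ℝ A hA.isSelfAdjoint,
    cfc_const_one ℝ B hB.isSelfAdjoint, mul_one, one_mul] at klein
  push_cast [mpow] at klein ⊢
  linear_combination klein

open scoped MatrixOrder in
lemma trace_mpow_mul_mpow_le (hA : A.PosSemidef) (hB : B.PosSemidef) (ha₀ : 0 ≤ a) (ha₁ : a ≤ 1) :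
    (mpow A a * mpow B (1 - a)).trace ≤ a * A.trace + (1 - a) * B.trace := by
  have gap := mul_trace_young_gap_nonneg hA.isHermitian hB.isHermitian 1 fun x hx y hy => by
    rw [one_mul, sub_nonneg]
    exact Real.geom_mean_le_arith_mean2_weighted ha₀ (sub_nonneg.mpr ha₁)
      (spectrum_nonneg_of_nonneg hA.nonneg hx) (spectrum_nonneg_of_nonneg hB.nonneg hy) (by ring)
  simpa using gap

open scoped MatrixOrder in
lemma le_trace_mpow_mul_mpow (hA : A.PosSemidef) (hB : B.PosDef) (ha : 1 ≤ a) :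
    a * A.trace + (1 - a) * B.trace ≤ (mpow A a * mpow B (1 - a)).trace := by
  have gap := mul_trace_young_gap_nonneg hA.isHermitian hB.isHermitian (-1) fun x hx y hy => by
    rw [neg_one_mul, neg_sub, sub_nonneg]
    exact weighted_arith_mean_le_geom_mean_of_one_le ha
      (spectrum_nonneg_of_nonneg hA.nonneg hx) (hB.isStrictlyPositive.spectrum_pos hy)
  simpa using gap

end Young

section MatrixPower

open scoped MatrixOrder

variable {d : ℕ} {A : Matrix (Fin d) (Fin d) ℂ}

lemma mpow_eq_rpow (hA : A.PosSemidef) (t : ℝ) : mpow A t = A ^ t :=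
  (CFC.rpow_eq_cfc_real hA.nonneg).symm

lemma posDef_mpow (hA : A.PosDef) (t : ℝ) : (mpow A t).PosDef := by
  rw [mpow_eq_rpow hA.posSemidef]
  exact (hA.isStrictlyPositive.rpow A t).posDef

lemma mpow_one (hA : A.PosSemidef) : mpow A 1 = A := by
  rw [mpow_eq_rpow hA, CFC.rpow_one A hA.nonneg]

lemma mpow_add (hA : A.PosDef) (s t : ℝ) : mpow A (s + t) = mpow A s * mpow A t := by
  simp only [mpow_eq_rpow hA.posSemidef, CFC.rpow_add hA.isUnit]

lemma mpow_mpow (hA : A.PosDef) {s : ℝ} (hs : s ≠ 0) (t : ℝ) :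
    mpow (mpow A s) t = mpow A (s * t) := by
  rw [mpow_eq_rpow (posDef_mpow hA s).posSemidef, mpow_eq_rpow hA.posSemidef,
    mpow_eq_rpow hA.posSemidef, CFC.rpow_rpow A s t hs hA.isStrictlyPositive]

lemma mpow_smul (hA : A.PosSemidef) {c : ℝ} (hc : 0 ≤ c) (t : ℝ) :
    mpow (c • A) t = c ^ t • mpow A t := by
  have finite_spectrum : (spectrum ℝ A).Finite := Matrix.finite_real_spectrum
  rw [mpow, mpow, ← cfc_comp_const_mul c (fun x => x ^ t) A
    ((finite_spectrum.image _).continuousOn _) hA.isHermitian.isSelfAdjoint,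
    ← cfc_smul _ _ A (finite_spectrum.continuousOn _)]
  exact cfc_congr fun x hx => Real.mul_rpow hc (spectrum_nonneg_of_nonneg hA.nonneg hx)

lemma commute_mpow {B : Matrix (Fin d) (Fin d) ℂ} (h : Commute A B) (t : ℝ) :
    Commute (mpow A t) B :=
  h.cfc_real _

end MatrixPower

section Tsallis

variable {d : ℕ} {ρ σ : Matrix (Fin d) (Fin d) ℂ} {a c : ℝ}

lemma tsallis_smul_left (hρ : ρ.PosSemidef) (hσ : σ.PosSemidef) (hc : 0 ≤ c) (ha : a ≠ 0) :
    tsallis a (c • ρ) σ = (c - 1) / (a - 1) + c * tsallis a ρ σ := by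
  have trace_nonneg := (Complex.le_def.mp (trace_mpow_mul_mpow_nonneg hρ hσ a (1 - a))).1
  rw [tsallis, tsallis, mpow_smul hρ hc, smul_mul_assoc, trace_smul, Complex.smul_re, smul_eq_mul,
    Real.mul_rpow (by positivity) trace_nonneg, one_div, Real.rpow_rpow_inv hc ha]
  ring

lemma tsallis_self (hρ : ρ.PosDef) (hρtr : ρ.trace = 1) : tsallis a ρ ρ = 0 := by
  rw [tsallis, ← mpow_add hρ, add_sub_cancel, mpow_one hρ.posSemidef, hρtr]
  simp

theorem tsallis_nonneg (hρ : ρ.PosDef) (hρtr : ρ.trace = 1) (hσ : σ.PosDef) (hσtr : σ.trace = 1) :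
    0 ≤ tsallis a ρ σ := by
  set q := (mpow ρ a * mpow σ (1 - a)).trace
  have q_nonneg : 0 ≤ q.re :=
    (Complex.le_def.mp (trace_mpow_mul_mpow_nonneg hρ.posSemidef hσ.posSemidef a (1 - a))).1
  change 0 ≤ (q.re ^ (1 / a) - 1) / (a - 1)
  rcases lt_or_ge a 0 with ha₀ | ha₀
  · have one_le_q : 1 ≤ q := by
      have young := le_trace_mpow_mul_mpow hσ.posSemidef hρ (a := 1 - a) (by linarith)
      rwa [hσtr, hρtr, sub_sub_cancel, trace_mul_comm, mul_one, mul_one, add_sub_cancel] at young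
    have := Real.rpow_le_one_of_one_le_of_nonpos (Complex.le_def.mp one_le_q).1
      (one_div_nonpos.mpr ha₀.le)
    exact div_nonneg_of_nonpos (sub_nonpos.mpr this) (by linarith)
  rcases le_total a 1 with ha₁ | ha₁
  · have q_le_one : q ≤ 1 := by
      have young := trace_mpow_mul_mpow_le hρ.posSemidef hσ.posSemidef ha₀ ha₁
      rwa [hσtr, hρtr, mul_one, mul_one, add_sub_cancel] at young
    have := Real.rpow_le_one q_nonneg (Complex.le_def.mp q_le_one).1 (one_div_nonneg.mpr ha₀)
    exact div_nonneg_of_nonpos (sub_nonpos.mpr this) (sub_nonpos.mpr ha₁)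
  · have one_le_q : 1 ≤ q := by
      have young := le_trace_mpow_mul_mpow hρ.posSemidef hσ ha₁
      rwa [hσtr, hρtr, mul_one, mul_one, add_sub_cancel] at young
    have := Real.one_le_rpow (Complex.le_def.mp one_le_q).1 (one_div_nonneg.mpr ha₀)
    exact div_nonneg (sub_nonneg.mpr this) (sub_nonneg.mpr ha₁)

end Tsallis

section Normalization

variable {𝕜 n : Type*} [RCLike 𝕜] [Fintype n] {A : Matrix n n 𝕜}

lemma ofReal_re_trace_of_isHermitian (hA : A.IsHermitian) : (RCLike.re A.trace : 𝕜) = A.trace := by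
  rw [← RCLike.conj_eq_iff_re, starRingEnd_apply, ← trace_conjTranspose, hA.eq]

lemma re_trace_pos_of_posDef [Nonempty n] (hA : A.PosDef) : 0 < RCLike.re A.trace :=
  (RCLike.pos_iff.mp hA.trace_pos).1

lemma posDef_inv_re_trace_smul [Nonempty n] (hA : A.PosDef) :
    ((RCLike.re A.trace)⁻¹ • A).PosDef :=
  hA.smul (inv_pos.mpr (re_trace_pos_of_posDef hA))

lemma trace_inv_re_trace_smul [Nonempty n] (hA : A.PosDef) :
    ((RCLike.re A.trace)⁻¹ • A).trace = 1 := by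
  rw [trace_smul, RCLike.real_smul_eq_coe_mul, RCLike.ofReal_inv,
    ofReal_re_trace_of_isHermitian hA.isHermitian, inv_mul_cancel₀ hA.trace_pos.ne']

end Normalization

section Kraus

variable {𝕜 ι m n : Type*} [RCLike 𝕜] [Fintype ι] [Fintype n]

/-- The completely positive map `X ↦ ∑ i, K i * X * (K i)ᴴ` with Kraus operators `K`. -/
def krausMap (K : ι → Matrix m n 𝕜) : Matrix n n 𝕜 →ₗ[𝕜] Matrix m m 𝕜 where
  toFun X := ∑ i, K i * X * (K i)ᴴ
  map_add' X Y := by simp only [Matrix.mul_add, Matrix.add_mul, Finset.sum_add_distrib]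
  map_smul' c X := by
    simp only [Matrix.mul_smul, Matrix.smul_mul, Finset.smul_sum, RingHom.id_apply]

lemma krausMap_apply (K : ι → Matrix m n 𝕜) (X : Matrix n n 𝕜) :
    krausMap K X = ∑ i, K i * X * (K i)ᴴ :=
  rfl

lemma krausMap_one [DecidableEq n] (K : ι → Matrix m n 𝕜) :
    krausMap K 1 = ∑ i, K i * (K i)ᴴ := by
  simp only [krausMap_apply, Matrix.mul_one]

lemma krausMap_conjTranspose (K : ι → Matrix m n 𝕜) (X : Matrix n n 𝕜) :
    krausMap K Xᴴ = (krausMap K X)ᴴ := by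
  simp only [krausMap_apply, conjTranspose_sum, conjTranspose_mul, conjTranspose_conjTranspose,
    Matrix.mul_assoc]

lemma krausMap_mul_of_commute {K : ι → Matrix n n 𝕜} {Y : Matrix n n 𝕜}
    (hY : ∀ i, Commute Y (K i)) (X : Matrix n n 𝕜) : krausMap K (Y * X) = Y * krausMap K X := by
  simp only [krausMap_apply, Finset.mul_sum, ← Matrix.mul_assoc, (hY _).eq]

lemma trace_krausMap [Fintype m] [DecidableEq n] {K : ι → Matrix m n 𝕜} (hK : ∑ i, (K i)ᴴ * K i = 1)
    (X : Matrix n n 𝕜) : (krausMap K X).trace = X.trace := by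
  calc (krausMap K X).trace = ∑ i, ((K i)ᴴ * K i * X).trace := by
        simp only [krausMap_apply, trace_sum, trace_mul_cycle (K _) X]
    _ = X.trace := by rw [← trace_sum, ← Finset.sum_mul, hK, Matrix.one_mul]

lemma posSemidef_krausMap [Finite m] (K : ι → Matrix m n 𝕜) {X : Matrix n n 𝕜} (hX : X.PosSemidef) :
    (krausMap K X).PosSemidef :=
  posSemidef_sum _ fun i _ => hX.mul_mul_conjTranspose_same (K i)

open scoped MatrixOrder in
lemma posDef_krausMap [Finite m] [DecidableEq m] [DecidableEq n] [Nonempty n] {K : ι → Matrix m n 𝕜}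
    (hK : krausMap K 1 = 1) {X : Matrix n n 𝕜} (hX : X.PosDef) :
    (krausMap K X).PosDef := by
  obtain ⟨r, hr, hrX⟩ := (CFC.exists_pos_algebraMap_le_iff hX.isHermitian.isSelfAdjoint).mpr
    fun x hx => hX.isStrictlyPositive.spectrum_pos hx
  have h : krausMap K X = r • 1 + krausMap K (X - algebraMap ℝ _ r) := by
    rw [Algebra.algebraMap_eq_smul_one, map_sub, LinearMap.map_smul_of_tower, hK, add_sub_cancel]
  rw [h]
  exact (PosDef.one.smul hr).add_posSemidef (posSemidef_krausMap K hrX)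

end Kraus

section KrausFixedPoints

variable {𝕜 ι n : Type*} [RCLike 𝕜] [Fintype ι] [Fintype n] [DecidableEq n]
  {K : ι → Matrix n n 𝕜} {X Y : Matrix n n 𝕜}

lemma sum_commutator_mul_conjTranspose (hunital : krausMap K 1 = 1) (hX : krausMap K X = X) :
    ∑ i, (K i * X - X * K i) * (K i * X - X * K i)ᴴ = krausMap K (X * Xᴴ) - X * Xᴴ := by
  have expand (i : ι) : (K i * X - X * K i) * (K i * X - X * K i)ᴴ = K i * (X * Xᴴ) * (K i)ᴴ -
      K i * X * (K i)ᴴ * Xᴴ - X * (K i * Xᴴ * (K i)ᴴ) + X * (K i * (K i)ᴴ) * Xᴴ := by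
    simp only [conjTranspose_sub, conjTranspose_mul]
    noncomm_ring
  simp only [expand, Finset.sum_add_distrib, Finset.sum_sub_distrib, ← Finset.sum_mul,
    ← Finset.mul_sum, ← krausMap_apply, ← krausMap_one, krausMap_conjTranspose, hX, hunital]
  noncomm_ring

theorem krausMap_eq_self_iff_commute (htrace : ∑ i, (K i)ᴴ * K i = 1) (hunital : krausMap K 1 = 1) :
    krausMap K X = X ↔ ∀ i, Commute X (K i) := by
  constructor
  · intro hX i
    have sum_trace_eq_zero :
        ∑ i, ((K i * X - X * K i) * (K i * X - X * K i)ᴴ).trace = 0 := by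
      rw [← trace_sum, sum_commutator_mul_conjTranspose hunital hX, trace_sub,
        trace_krausMap htrace, sub_self]
    rw [Finset.sum_eq_zero_iff_of_nonneg
      fun i _ => (posSemidef_self_mul_conjTranspose _).trace_nonneg] at sum_trace_eq_zero
    exact (sub_eq_zero.mp (trace_mul_conjTranspose_self_eq_zero_iff.mp
      (sum_trace_eq_zero i (Finset.mem_univ i)))).symm
  · intro hX
    calc krausMap K X = X * krausMap K 1 := by
          simp only [krausMap_apply, Finset.mul_sum, ← (hX _).eq, Matrix.mul_assoc, Matrix.one_mul]
      _ = X := by rw [hunital, Matrix.mul_one]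

lemma trace_krausMap_mul_of_commute (htrace : ∑ i, (K i)ᴴ * K i = 1)
    (hY : ∀ i, Commute Y (K i)) : (krausMap K X * Y).trace = (X * Y).trace := by
  rw [trace_mul_comm, ← krausMap_mul_of_commute hY, trace_krausMap htrace, trace_mul_comm]

end KrausFixedPoints

section KrausPowerMean

variable {ι : Type*} [Fintype ι] {d : ℕ} {K : ι → Matrix (Fin d) (Fin d) ℂ} {a : ℝ}
  {ρ σ : Matrix (Fin d) (Fin d) ℂ}

/-- The power mean `(E (ρ ^ a)) ^ (1 / a)` for `E = krausMap K`. Normalized to trace one, it is the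
minimizer of `tsallis a ρ` over the states fixed by `E`. -/
noncomputable def krausPowerMean (K : ι → Matrix (Fin d) (Fin d) ℂ) (a : ℝ)
    (ρ : Matrix (Fin d) (Fin d) ℂ) : Matrix (Fin d) (Fin d) ℂ :=
  mpow (krausMap K (mpow ρ a)) (1 / a)

lemma posDef_krausPowerMean [NeZero d] (hunital : krausMap K 1 = 1) (hρ : ρ.PosDef) :
    (krausPowerMean K a ρ).PosDef :=
  posDef_mpow (posDef_krausMap hunital (posDef_mpow hρ a)) _

lemma krausMap_krausPowerMean (htrace : ∑ i, (K i)ᴴ * K i = 1) (hunital : krausMap K 1 = 1)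
    (hidem : ∀ X, krausMap K (krausMap K X) = krausMap K X) :
    krausMap K (krausPowerMean K a ρ) = krausPowerMean K a ρ := by
  rw [krausMap_eq_self_iff_commute htrace hunital]
  exact fun i => commute_mpow ((krausMap_eq_self_iff_commute htrace hunital).mp (hidem _) i) _

lemma tsallis_krausPowerMean_left [NeZero d] (htrace : ∑ i, (K i)ᴴ * K i = 1)
    (hunital : krausMap K 1 = 1) (ha : a ≠ 0) (hρ : ρ.PosDef) (hσ : krausMap K σ = σ) :
    tsallis a (krausPowerMean K a ρ) σ = tsallis a ρ σ := by
  have mean_pow : mpow (krausPowerMean K a ρ) a = krausMap K (mpow ρ a) := by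
    have hE := posDef_krausMap hunital (posDef_mpow hρ a)
    rw [krausPowerMean, mpow_mpow hE (one_div_ne_zero ha), one_div_mul_cancel ha,
      mpow_one hE.posSemidef]
  have hσ_pow (i : ι) : Commute (mpow σ (1 - a)) (K i) :=
    commute_mpow ((krausMap_eq_self_iff_commute htrace hunital).mp hσ i) _
  rw [tsallis, tsallis, mean_pow, trace_krausMap_mul_of_commute htrace hσ_pow]

theorem tsallis_eq_add_mul_of_krausPowerMean_eq_smul [NeZero d] (htrace : ∑ i, (K i)ᴴ * K i = 1)
    (hunital : krausMap K 1 = 1) (ha : a ≠ 0) (hρ : ρ.PosDef) {τ : Matrix (Fin d) (Fin d) ℂ}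
    (hτ : τ.PosSemidef) {N : ℝ} (hN : 0 ≤ N) (hmean : krausPowerMean K a ρ = N • τ)
    (hσ : σ.PosSemidef) (hσfix : krausMap K σ = σ) :
    tsallis a ρ σ = (N - 1) / (a - 1) + N * tsallis a τ σ := by
  rw [← tsallis_krausPowerMean_left htrace hunital ha hρ hσfix, hmean,
    tsallis_smul_left hτ hσ hN ha]

end KrausPowerMean

theorem stmt_0_general {d : ℕ} [NeZero d]
    (E : Matrix (Fin d) (Fin d) ℂ →ₗ[ℂ] Matrix (Fin d) (Fin d) ℂ)
    (hKraus : ∃ (n : ℕ) (K : Fin n → Matrix (Fin d) (Fin d) ℂ),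
      (∀ X, E X = ∑ i, K i * X * (K i)ᴴ) ∧ ∑ i, (K i)ᴴ * K i = 1)
    (hUnital : E 1 = 1)
    (hIdem : ∀ X, E (E X) = E X)
    (a : ℝ) (ha₀ : a ≠ 0) (_ha₁ : a ≠ 1)
    (ρ : Matrix (Fin d) (Fin d) ℂ) (hρ : ρ.PosDef)
    (N : ℝ) (hN : N = ((mpow (E (mpow ρ a)) (1 / a)).trace).re)
    (σstar : Matrix (Fin d) (Fin d) ℂ)
    (hσstar : σstar = ((N : ℂ))⁻¹ • mpow (E (mpow ρ a)) (1 / a)) :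
    (⨅ σ : {σ : Matrix (Fin d) (Fin d) ℂ // σ.PosDef ∧ σ.trace = 1 ∧ E σ = σ},
        tsallis a ρ (σ : Matrix (Fin d) (Fin d) ℂ)) = (N - 1) / (a - 1) ∧
    σstar.PosDef ∧ σstar.trace = 1 ∧ E σstar = σstar ∧
    tsallis a ρ σstar = (N - 1) / (a - 1) := by
  obtain ⟨n, K, hE, htrace⟩ := hKraus
  obtain rfl : E = krausMap K := LinearMap.ext hE
  have hω : (krausPowerMean K a ρ).PosDef := posDef_krausPowerMean hUnital hρ
  have N_pos : 0 < N := hN ▸ re_trace_pos_of_posDef hω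
  have hσ_eq : σstar = N⁻¹ • krausPowerMean K a ρ := by
    rw [hσstar, ← Complex.ofReal_inv, Complex.coe_smul, krausPowerMean]
  have hσpos : σstar.PosDef := by rw [hσ_eq, hN]; exact posDef_inv_re_trace_smul hω
  have hσtr : σstar.trace = 1 := by rw [hσ_eq, hN]; exact trace_inv_re_trace_smul hω
  have hσfix : krausMap K σstar = σstar := by
    rw [hσ_eq, LinearMap.map_smul_of_tower, krausMap_krausPowerMean htrace hUnital hIdem]
  have pythagoras {σ} (hσ : σ.PosDef) (hfix : krausMap K σ = σ) :
      tsallis a ρ σ = (N - 1) / (a - 1) + N * tsallis a σstar σ :=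
    tsallis_eq_add_mul_of_krausPowerMean_eq_smul htrace hUnital ha₀ hρ hσpos.posSemidef N_pos.le
      (by rw [hσ_eq, smul_inv_smul₀ N_pos.ne']) hσ.posSemidef hfix
  have attained : tsallis a ρ σstar = (N - 1) / (a - 1) := by
    rw [pythagoras hσpos hσfix, tsallis_self hσpos hσtr, mul_zero, add_zero]
  refine ⟨IsLeast.csInf_eq ⟨⟨⟨σstar, hσpos, hσtr, hσfix⟩, attained⟩, ?_⟩,
    hσpos, hσtr, hσfix, attained⟩
  rintro _ ⟨⟨σ, hσ, hσtr', hfix⟩, rfl⟩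
  exact (le_add_of_nonneg_right (mul_nonneg N_pos.le
    (tsallis_nonneg hσpos hσtr hσ hσtr'))).trans_eq (pythagoras hσ hfix).symm

/-- For a unital idempotent CPTP map `E`, `a ∈ (0,1) ∪ (1,2]` and a positive definite
density matrix `ρ`, the infimum of the Tsallis relative entropy over positive definite
density matrices fixed by `E` equals `(Tr((E(ρ^a))^(1/a)) - 1)/(a - 1)`, and it is
attained at `σ* = (E(ρ^a))^(1/a) / Tr((E(ρ^a))^(1/a))`. -/
theorem stmt_0 {d : ℕ}
    (E : Matrix (Fin d) (Fin d) ℂ →ₗ[ℂ] Matrix (Fin d) (Fin d) ℂ)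
    (hKraus : ∃ (n : ℕ) (K : Fin n → Matrix (Fin d) (Fin d) ℂ),
      (∀ X, E X = ∑ i, K i * X * (K i)ᴴ) ∧ ∑ i, (K i)ᴴ * K i = 1)
    (hUnital : E 1 = 1)
    (hIdem : ∀ X, E (E X) = E X)
    (a : ℝ) (ha : a ∈ Set.Ioo (0 : ℝ) 1 ∪ Set.Ioc (1 : ℝ) 2)
    (ρ : Matrix (Fin d) (Fin d) ℂ) (hρ : ρ.PosDef) (hρtr : ρ.trace = 1)
    (N : ℝ) (hN : N = ((mpow (E (mpow ρ a)) (1 / a)).trace).re)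
    (σstar : Matrix (Fin d) (Fin d) ℂ)
    (hσstar : σstar = ((N : ℂ))⁻¹ • mpow (E (mpow ρ a)) (1 / a)) :
    (⨅ σ : {σ : Matrix (Fin d) (Fin d) ℂ // σ.PosDef ∧ σ.trace = 1 ∧ E σ = σ},
        tsallis a ρ (σ : Matrix (Fin d) (Fin d) ℂ)) = (N - 1) / (a - 1) ∧
    σstar.PosDef ∧ σstar.trace = 1 ∧ E σstar = σstar ∧
    tsallis a ρ σstar = (N - 1) / (a - 1) := by
  have : NeZero d := ⟨by rintro rfl; simp [Matrix.trace] at hρtr⟩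
  have ha' : a ≠ 0 ∧ a ≠ 1 := by grind
  exact stmt_0_general E hKraus hUnital hIdem a ha'.1 ha'.2 ρ hρ N hN σstar hσstar
end

section
/- Let a ∈ (0,1)∪(1,2], let ρ be a density matrix and σ a positive definite density matrix on ℂ^d. Then S̃_a(ρ|σ) ≥ 0, with equality if and only if ρ = σ. -/
open Matrix
open scoped ComplexOrder

/-!
Let `λᵢ`, `μⱼ` be the eigenvalues of `ρ`, `σ`, and `W` the unitary matrix of inner products of
their eigenvectors. Then `Re Tr (f(ρ) g(σ)) = ∑ᵢⱼ f(λᵢ) g(μⱼ) |Wᵢⱼ|²`, so that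
`(Tr (ρᵃ σ¹⁻ᵃ) - 1) / (a - 1)` is the sum of the scalar divergences
`(λᵢᵃ μⱼ¹⁻ᵃ - a λᵢ - (1 - a) μⱼ) / (a - 1)` with weights `|Wᵢⱼ|²`. By the weighted AM-GM inequality
each divergence is nonnegative and vanishes only for `λᵢ = μⱼ`; hence the sum vanishes only if `W`
intertwines the two diagonalizations, that is, if `ρ = σ`. Replacing `Tr (ρᵃ σ¹⁻ᵃ)` by its power
with exponent `1 / a > 0` does not move it across `1`.
-/

section Scalar

/-- The pointwise Tsallis divergence: summed over a pair of probability distributions, the linear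
terms add up to `1`, which gives the Tsallis relative entropy `(∑ᵢ xᵢᵃ yᵢ¹⁻ᵃ - 1) / (a - 1)`. -/
noncomputable def tsallisDiv (a x y : ℝ) : ℝ :=
  (x ^ a * y ^ (1 - a) - (a * x + (1 - a) * y)) / (a - 1)

variable {a x y : ℝ}

lemma add_lt_rpow_mul_rpow_one_sub (ha : 1 < a) (hx : 0 ≤ x) (hy : 0 < y) (hxy : x ≠ y) :
    a * x + (1 - a) * y < x ^ a * y ^ (1 - a) := by
  have ha0 : 0 < a := by linarith
  set z := x ^ a * y ^ (1 - a)
  have hz : 0 ≤ z := by positivity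
  -- AM-GM for `z` and `y` with weight `a⁻¹`: their weighted geometric mean is `x`.
  have hmean : z ^ a⁻¹ * y ^ (1 - a⁻¹) = x := by
    rw [Real.mul_rpow (by positivity) (by positivity), Real.rpow_rpow_inv hx ha0.ne',
      ← Real.rpow_mul hy.le, mul_assoc, ← Real.rpow_add hy]
    have : (1 - a) * a⁻¹ + (1 - a⁻¹) = 0 := by field_simp; ring
    rw [this, Real.rpow_zero, mul_one]
  have hzy : z ≠ y := by
    intro h
    rw [h, ← Real.rpow_add hy, add_sub_cancel, Real.rpow_one] at hmean
    exact hxy hmean.symm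
  have hlt : x < a⁻¹ * z + (1 - a⁻¹) * y := hmean ▸
    (Real.geom_mean_lt_arith_mean2_weighted_iff_of_pos (inv_pos.2 ha0)
      (sub_pos.2 (inv_lt_one_of_one_lt₀ ha)) hz hy.le (add_sub_cancel _ _)).2 hzy
  calc a * x + (1 - a) * y < a * (a⁻¹ * z + (1 - a⁻¹) * y) + (1 - a) * y := by gcongr
    _ = z := by field_simp; ring

lemma tsallisDiv_self (hx : 0 ≤ x) : tsallisDiv a x x = 0 := by
  have hpow : x ^ a * x ^ (1 - a) = x := by
    rw [← Real.rpow_add' hx (by simp), add_sub_cancel, Real.rpow_one]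
  rw [tsallisDiv, hpow]
  ring

lemma tsallisDiv_pos (ha₀ : 0 < a) (ha₁ : a ≠ 1) (hx : 0 ≤ x) (hy : 0 ≤ y) (hay : 1 < a → 0 < y)
    (hxy : x ≠ y) : 0 < tsallisDiv a x y := by
  rcases ha₁.lt_or_gt with ha | ha
  · exact div_pos_of_neg_of_neg
      (sub_neg.2 <| (Real.geom_mean_lt_arith_mean2_weighted_iff_of_pos ha₀ (sub_pos.2 ha) hx hy
        (add_sub_cancel _ _)).2 hxy)
      (sub_neg.2 ha)
  · exact div_pos (sub_pos.2 (add_lt_rpow_mul_rpow_one_sub ha hx (hay ha) hxy)) (sub_pos.2 ha)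

lemma tsallisDiv_nonneg (ha₀ : 0 < a) (ha₁ : a ≠ 1) (hx : 0 ≤ x) (hy : 0 ≤ y)
    (hay : 1 < a → 0 < y) : 0 ≤ tsallisDiv a x y := by
  rcases eq_or_ne x y with rfl | hxy
  · exact (tsallisDiv_self hx).ge
  · exact (tsallisDiv_pos ha₀ ha₁ hx hy hay hxy).le

lemma tsallisDiv_eq_zero_iff (ha₀ : 0 < a) (ha₁ : a ≠ 1) (hx : 0 ≤ x) (hy : 0 ≤ y)
    (hay : 1 < a → 0 < y) : tsallisDiv a x y = 0 ↔ x = y := by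
  refine ⟨fun h => ?_, ?_⟩
  · by_contra hxy
    exact (tsallisDiv_pos ha₀ ha₁ hx hy hay hxy).ne' h
  · rintro rfl
    exact tsallisDiv_self hx

lemma rpow_sub_one_div_nonneg_iff {q b : ℝ} (c : ℝ) (hq : 0 ≤ q) (hb : 0 < b) :
    0 ≤ (q ^ b - 1) / c ↔ 0 ≤ (q - 1) / c := by
  have hle : q ^ b ≤ 1 ↔ q ≤ 1 := by
    simpa only [Real.one_rpow] using Real.rpow_le_rpow_iff hq zero_le_one hb
  have hge : 1 ≤ q ^ b ↔ 1 ≤ q := by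
    simpa only [Real.one_rpow] using Real.rpow_le_rpow_iff zero_le_one hq hb
  simp only [div_nonneg_iff, sub_nonneg, sub_nonpos, hle, hge]

lemma rpow_sub_one_div_eq_zero_iff {q b : ℝ} (c : ℝ) (hq : 0 ≤ q) (hb : b ≠ 0) :
    (q ^ b - 1) / c = 0 ↔ (q - 1) / c = 0 := by
  have heq : q ^ b = 1 ↔ q = 1 := by
    simpa only [Real.one_rpow] using Real.rpow_left_inj hq zero_le_one hb
  simp only [div_eq_zero_iff, sub_eq_zero, heq]

end Scalar

section EigenSum

variable {n 𝕜 : Type*} [Fintype n] [DecidableEq n] [RCLike 𝕜] {A B : Matrix n n 𝕜}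

/-- The unitary matrix whose `(i, j)` entry is the inner product of the `i`-th eigenvector of `A`
with the `j`-th eigenvector of `B`. -/
noncomputable def eigenOverlap (hA : A.IsHermitian) (hB : B.IsHermitian) : Matrix n n 𝕜 :=
  star (hA.eigenvectorUnitary : Matrix n n 𝕜) * (hB.eigenvectorUnitary : Matrix n n 𝕜)

/-- The double sum `∑ᵢⱼ k(λᵢ, μⱼ) |Wᵢⱼ|²` over the eigenvalues of `A` and `B`, weighted by the
overlaps of their eigenvectors. It is linear in the kernel `k`, and represents
`Re Tr (f(A) g(B))` when `k x y = f x * g y`. -/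
noncomputable def eigenSum (hA : A.IsHermitian) (hB : B.IsHermitian) (k : ℝ → ℝ → ℝ) : ℝ :=
  ∑ i, ∑ j, k (hA.eigenvalues i) (hB.eigenvalues j) * ‖eigenOverlap hA hB i j‖ ^ 2

variable (hA : A.IsHermitian) (hB : B.IsHermitian)

lemma mul_eigenvectorUnitary : A * (hA.eigenvectorUnitary : Matrix n n 𝕜) =
    (hA.eigenvectorUnitary : Matrix n n 𝕜) * diagonal (RCLike.ofReal ∘ hA.eigenvalues) := by
  rw [← hA.conjStarAlgAut_star_eigenvectorUnitary, Unitary.conjStarAlgAut_star_apply, mul_assoc,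
    ← mul_assoc, ← Unitary.coe_star, Unitary.coe_mul_star_self, one_mul]

lemma star_eigenvectorUnitary_mul : star (hA.eigenvectorUnitary : Matrix n n 𝕜) * A =
    diagonal (RCLike.ofReal ∘ hA.eigenvalues) * star (hA.eigenvectorUnitary : Matrix n n 𝕜) := by
  rw [← hA.conjStarAlgAut_star_eigenvectorUnitary, Unitary.conjStarAlgAut_star_apply, mul_assoc,
    ← Unitary.coe_star, Unitary.coe_mul_star_self, mul_one]

lemma eq_iff_forall_eigenvalues_eq_or_eigenOverlap_eq_zero :
    A = B ↔ ∀ i j, hA.eigenvalues i = hB.eigenvalues j ∨ eigenOverlap hA hB i j = 0 := by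
  set U := (hA.eigenvectorUnitary : Matrix n n 𝕜)
  set V := (hB.eigenvectorUnitary : Matrix n n 𝕜)
  have hUA : star U * A * V =
      diagonal (RCLike.ofReal ∘ hA.eigenvalues) * eigenOverlap hA hB := by
    rw [eigenOverlap, ← mul_assoc, star_eigenvectorUnitary_mul hA]
  have hBV : star U * B * V =
      eigenOverlap hA hB * diagonal (RCLike.ofReal ∘ hB.eigenvalues) := by
    rw [eigenOverlap, mul_assoc, mul_assoc, mul_eigenvectorUnitary hB]
  have hconj : A = B ↔ star U * A * V = star U * B * V := by
    rw [Unitary.mul_left_inj hB.eigenvectorUnitary, ← Unitary.coe_star, Unitary.mul_right_inj]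
  rw [hconj, hUA, hBV, ← Matrix.ext_iff]
  refine forall₂_congr fun i j => ?_
  rw [diagonal_mul, mul_diagonal, mul_comm, mul_eq_mul_left_iff]
  simp only [Function.comp_apply, RCLike.ofReal_inj]

lemma re_trace_cfc_mul_cfc (f g : ℝ → ℝ) :
    RCLike.re (cfc f A * cfc g B).trace = eigenSum hA hB fun x y => f x * g y := by
  set D : Matrix n n 𝕜 := diagonal (RCLike.ofReal ∘ f ∘ hA.eigenvalues)
  set E : Matrix n n 𝕜 := diagonal (RCLike.ofReal ∘ g ∘ hB.eigenvalues)
  set W := eigenOverlap hA hB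
  have htrace : (cfc f A * cfc g B).trace = (D * W * (E * star W)).trace := by
    rw [hA.cfc_eq, hB.cfc_eq, IsHermitian.cfc, IsHermitian.cfc, Unitary.conjStarAlgAut_apply,
      Unitary.conjStarAlgAut_apply, mul_assoc, mul_assoc, trace_mul_comm]
    simp only [W, D, E, eigenOverlap, star_mul, star_star, mul_assoc]
  have hentry (i j : n) : (D * W) i j * (E * star W) j i =
      ((f (hA.eigenvalues i) * g (hB.eigenvalues j) * ‖W i j‖ ^ 2 : ℝ) : 𝕜) := by
    rw [diagonal_mul, diagonal_mul, star_apply]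
    push_cast
    rw [← RCLike.mul_conj]
    simp only [Function.comp_apply, RCLike.star_def]
    ring
  rw [htrace]
  simp only [trace, diag_apply, mul_apply (M := D * W), hentry, map_sum, RCLike.ofReal_re, eigenSum,
    W]

lemma re_trace_left_eq_eigenSum : RCLike.re A.trace = eigenSum hA hB fun x _ => x := by
  have h := re_trace_cfc_mul_cfc hA hB (fun x => x) (fun _ => 1)
  rw [cfc_id' ℝ A hA.isSelfAdjoint, cfc_const_one ℝ B hB.isSelfAdjoint, mul_one] at h
  simpa only [mul_one] using h

lemma re_trace_right_eq_eigenSum : RCLike.re B.trace = eigenSum hA hB fun _ y => y := by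
  have h := re_trace_cfc_mul_cfc hA hB (fun _ => 1) (fun y => y)
  rw [cfc_id' ℝ B hB.isSelfAdjoint, cfc_const_one ℝ A hA.isSelfAdjoint, one_mul] at h
  simpa only [one_mul] using h

variable {hA hB} {k : ℝ → ℝ → ℝ}

lemma eigenSum_nonneg (hk : ∀ i j, 0 ≤ k (hA.eigenvalues i) (hB.eigenvalues j)) :
    0 ≤ eigenSum hA hB k :=
  Finset.sum_nonneg fun i _ => Finset.sum_nonneg fun j _ => mul_nonneg (hk i j) (sq_nonneg _)

lemma eigenSum_eq_zero_iff (hk : ∀ i j, 0 ≤ k (hA.eigenvalues i) (hB.eigenvalues j))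
    (hk₀ : ∀ i j, k (hA.eigenvalues i) (hB.eigenvalues j) = 0 ↔
      hA.eigenvalues i = hB.eigenvalues j) :
    eigenSum hA hB k = 0 ↔ A = B := by
  have hterm (i j : n) :
      0 ≤ k (hA.eigenvalues i) (hB.eigenvalues j) * ‖eigenOverlap hA hB i j‖ ^ 2 :=
    mul_nonneg (hk i j) (sq_nonneg _)
  rw [eigenSum, Fintype.sum_eq_zero_iff_of_nonneg fun i => Finset.sum_nonneg fun j _ => hterm i j,
    eq_iff_forall_eigenvalues_eq_or_eigenOverlap_eq_zero hA hB]
  simp only [funext_iff, Pi.zero_apply]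
  refine forall_congr' fun i => ?_
  rw [Finset.sum_eq_zero_iff_of_nonneg fun j _ => hterm i j]
  simp only [Finset.mem_univ, true_imp_iff, mul_eq_zero, hk₀, sq_eq_zero_iff, norm_eq_zero]

end EigenSum

section TsallisTrace

variable {n 𝕜 : Type*} [Fintype n] [DecidableEq n] [RCLike 𝕜] {A B : Matrix n n 𝕜} {a : ℝ}

lemma re_trace_rpow_mul_rpow_nonneg (hA : A.PosSemidef) (hB : B.PosSemidef) (s t : ℝ) :
    0 ≤ RCLike.re (cfc (fun x : ℝ => x ^ s) A * cfc (fun x : ℝ => x ^ t) B).trace := by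
  rw [re_trace_cfc_mul_cfc hA.isHermitian hB.isHermitian]
  exact eigenSum_nonneg fun i j => mul_nonneg
    (Real.rpow_nonneg (hA.eigenvalues_nonneg i) _) (Real.rpow_nonneg (hB.eigenvalues_nonneg j) _)

lemma eigenSum_tsallisDiv (hA : A.IsHermitian) (hB : B.IsHermitian) (a : ℝ) :
    eigenSum hA hB (tsallisDiv a) =
      (RCLike.re (cfc (fun x : ℝ => x ^ a) A * cfc (fun x : ℝ => x ^ (1 - a)) B).trace -
        (a * RCLike.re A.trace + (1 - a) * RCLike.re B.trace)) / (a - 1) := by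
  rw [re_trace_cfc_mul_cfc hA hB, re_trace_left_eq_eigenSum hA hB, re_trace_right_eq_eigenSum hA hB]
  simp only [eigenSum, Finset.mul_sum, ← Finset.sum_add_distrib, ← Finset.sum_sub_distrib,
    Finset.sum_div]
  refine Finset.sum_congr rfl fun i _ => Finset.sum_congr rfl fun j _ => ?_
  rw [tsallisDiv]
  ring

lemma eigenSum_tsallisDiv_nonneg (ha₀ : 0 < a) (ha₁ : a ≠ 1) (hA : A.PosSemidef)
    (hB : B.PosSemidef) (haB : 1 < a → B.PosDef) :
    0 ≤ eigenSum hA.isHermitian hB.isHermitian (tsallisDiv a) :=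
  eigenSum_nonneg fun i j => tsallisDiv_nonneg ha₀ ha₁ (hA.eigenvalues_nonneg i)
    (hB.eigenvalues_nonneg j) fun ha => (haB ha).eigenvalues_pos j

lemma eigenSum_tsallisDiv_eq_zero_iff (ha₀ : 0 < a) (ha₁ : a ≠ 1) (hA : A.PosSemidef)
    (hB : B.PosSemidef) (haB : 1 < a → B.PosDef) :
    eigenSum hA.isHermitian hB.isHermitian (tsallisDiv a) = 0 ↔ A = B :=
  eigenSum_eq_zero_iff
    (fun i j => tsallisDiv_nonneg ha₀ ha₁ (hA.eigenvalues_nonneg i)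
      (hB.eigenvalues_nonneg j) fun ha => (haB ha).eigenvalues_pos j)
    (fun i j => tsallisDiv_eq_zero_iff ha₀ ha₁ (hA.eigenvalues_nonneg i)
      (hB.eigenvalues_nonneg j) fun ha => (haB ha).eigenvalues_pos j)

end TsallisTrace

theorem stmt_7_general {d : ℕ} {a : ℝ} (ha₀ : 0 < a) (ha₁ : a ≠ 1)
    {ρ σ : Matrix (Fin d) (Fin d) ℂ} (hρ : ρ.PosSemidef) (hρtr : ρ.trace = 1)
    (hσ : σ.PosSemidef) (hσtr : σ.trace = 1) (haσ : 1 < a → σ.PosDef) :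
    0 ≤ tsallis a ρ σ ∧ (tsallis a ρ σ = 0 ↔ ρ = σ) := by
  set Q := (mpow ρ a * mpow σ (1 - a)).trace.re
  have hQ : 0 ≤ Q := re_trace_rpow_mul_rpow_nonneg hρ hσ a (1 - a)
  have hsum : eigenSum hρ.isHermitian hσ.isHermitian (tsallisDiv a) = (Q - 1) / (a - 1) := by
    rw [eigenSum_tsallisDiv, hρtr, hσtr, RCLike.one_re, mul_one, mul_one, add_sub_cancel]
    rfl
  have ha : 0 < 1 / a := one_div_pos.2 ha₀
  constructor
  · rw [tsallis, rpow_sub_one_div_nonneg_iff _ hQ ha, ← hsum]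
    exact eigenSum_tsallisDiv_nonneg ha₀ ha₁ hρ hσ haσ
  · rw [tsallis, rpow_sub_one_div_eq_zero_iff _ hQ ha.ne', ← hsum]
    exact eigenSum_tsallisDiv_eq_zero_iff ha₀ ha₁ hρ hσ haσ

/-- For `a ∈ (0,1) ∪ (1,2]`, a density matrix `ρ` and a positive definite density
matrix `σ`: `S̃_a(ρ|σ) ≥ 0`, with equality if and only if `ρ = σ`. -/
theorem stmt_7 {d : ℕ}
    (a : ℝ) (ha : a ∈ Set.Ioo (0 : ℝ) 1 ∪ Set.Ioc (1 : ℝ) 2)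
    (ρ : Matrix (Fin d) (Fin d) ℂ) (hρ : ρ.PosSemidef) (hρtr : ρ.trace = 1)
    (σ : Matrix (Fin d) (Fin d) ℂ) (hσ : σ.PosDef) (hσtr : σ.trace = 1) :
    0 ≤ tsallis a ρ σ ∧ (tsallis a ρ σ = 0 ↔ ρ = σ) :=
  stmt_7_general (ha.elim (·.1) (zero_lt_one.trans ·.1)) (ha.elim (·.2.ne) (·.1.ne'))
    hρ hρtr hσ.posSemidef hσtr fun _ => hσ
end

section
/- Let E be a CPTP map on d×d complex matrices and let a ∈ (0,1)∪(1,2]. Then the function ρ ↦ (Tr((E(ρ^a))^{1/a}) − 1)/(a − 1) is convex on the set of positive definite density matrices: for all positive definite density matrices ρ₁, ρ₂ and all t ∈ [0,1], the value at t·ρ₁ + (1−t)·ρ₂ is at most t times the value at ρ₁ plus (1−t) times the value at ρ₂. -/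
open Matrix
open scoped ComplexOrder

/-!
Write `X = E(ρ ^ a)`. Young's inequality for traces, with the optimal `Y` being `X ^ (1 / a)`,
gives the variational formula
`Tr X ^ (1 / a) / (a - 1) = inf_{Y > 0} (Tr X Y ^ (1 - a) / (a (a - 1)) + Tr Y / a)`.
Partial minimisation preserves convexity, so it suffices that
`(A, Y) ↦ Tr K A ^ p Kᴴ Y ^ (1 - p) / (p (p - 1))` is jointly convex (Lieb, Ando) for every Kraus
operator `K`. In eigenbases of `A` and `Y` this trace is a double sum of `|⟨v, K u⟩| ^ 2` weighted
by a function `φ` of the two eigenvalues. For `φ = α ^ 2 / (r α + s y)` completing the square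
displays it as a supremum of functionals linear in `(A, Y)`, and the powers
`α ^ p y ^ (1 - p)` are integrals of such `φ`, up to linear terms.
-/

open MeasureTheory Set Filter Topology

section Convexity

variable {E F : Type*} [AddCommMonoid E] [Module ℝ E] [AddCommMonoid F] [Module ℝ F]

theorem convexOn_of_forall_exists_support {s : Set E} {f : E → ℝ} (hs : Convex ℝ s)
    (h : ∀ x ∈ s, ∃ g, ConvexOn ℝ s g ∧ (∀ y ∈ s, g y ≤ f y) ∧ g x = f x) : ConvexOn ℝ s f := by
  refine ⟨hs, fun x hx y hy a b ha hb hab => ?_⟩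
  obtain ⟨g, hg, hgf, hgz⟩ := h _ (hs hx hy ha hb hab)
  calc f (a • x + b • y) = g (a • x + b • y) := hgz.symm
    _ ≤ a • g x + b • g y := hg.2 hx hy ha hb hab
    _ ≤ a • f x + b • f y := by gcongr <;> exact hgf _ ‹_›

theorem convexOn_of_isGLB {s : Set E} {t : Set F} {g : E × F → ℝ} {f : E → ℝ} (hs : Convex ℝ s)
    (hg : ConvexOn ℝ (s ×ˢ t) g) (hf : ∀ x ∈ s, IsGLB ((fun y => g (x, y)) '' t) (f x)) :
    ConvexOn ℝ s f := by
  refine ⟨hs, fun x₁ hx₁ x₂ hx₂ a b ha hb hab => le_of_forall_pos_le_add fun ε hε => ?_⟩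
  obtain ⟨_, ⟨y₁, hy₁, rfl⟩, -, h₁⟩ := (hf x₁ hx₁).exists_between (lt_add_of_pos_right _ hε)
  obtain ⟨_, ⟨y₂, hy₂, rfl⟩, -, h₂⟩ := (hf x₂ hx₂).exists_between (lt_add_of_pos_right _ hε)
  have hz := hg.1 (mk_mem_prod hx₁ hy₁) (mk_mem_prod hx₂ hy₂) ha hb hab
  calc f (a • x₁ + b • x₂)
      ≤ g (a • (x₁, y₁) + b • (x₂, y₂)) := (hf _ hz.1).1 (mem_image_of_mem _ hz.2)
    _ ≤ a • g (x₁, y₁) + b • g (x₂, y₂) := hg.2 ⟨hx₁, hy₁⟩ ⟨hx₂, hy₂⟩ ha hb hab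
    _ ≤ a • (f x₁ + ε) + b • (f x₂ + ε) := by gcongr
    _ = a • f x₁ + b • f x₂ + ε := by
      rw [smul_add, smul_add, add_add_add_comm, ← add_smul, hab, one_smul]

theorem convexOn_sum {ι : Type*} (u : Finset ι) {s : Set E} {f : ι → E → ℝ} (hs : Convex ℝ s)
    (hf : ∀ i ∈ u, ConvexOn ℝ s (f i)) : ConvexOn ℝ s fun x => ∑ i ∈ u, f i x := by
  refine ⟨hs, fun x hx y hy a b ha hb hab => ?_⟩
  rw [Finset.smul_sum, Finset.smul_sum, ← Finset.sum_add_distrib]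
  exact Finset.sum_le_sum fun i hi => (hf i hi).2 hx hy ha hb hab

end Convexity

variable {m n 𝕜 : Type*} [RCLike 𝕜]

theorem convex_setOf_posSemidef : Convex ℝ {A : Matrix n n 𝕜 | A.PosSemidef} :=
  fun _ hA _ hB _ _ ha hb _ => (hA.smul ha).add (hB.smul hb)

theorem convex_setOf_posDef : Convex ℝ {A : Matrix n n 𝕜 | A.PosDef} :=
  convex_iff_forall_pos.2 fun _ hA _ hB _ _ ha hb _ => (hA.smul ha).add (hB.smul hb)

variable (m n 𝕜) in
/-- The pairs `(A, Y)` with `A` positive semidefinite and `Y` positive definite, on which joint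
convexity is studied. They are taken inside the pairs of self-adjoint matrices so that the spectral
data of both entries can be chosen without reference to positivity. -/
def posPairs : Set (selfAdjoint (Matrix n n 𝕜) × selfAdjoint (Matrix m m 𝕜)) :=
  {p | (p.1 : Matrix n n 𝕜).PosSemidef ∧ (p.2 : Matrix m m 𝕜).PosDef}

theorem convex_posPairs : Convex ℝ (posPairs m n 𝕜) := fun _ hp _ hq _ _ ha hb hab =>
  ⟨convex_setOf_posSemidef hp.1 hq.1 ha hb hab, convex_setOf_posDef hp.2 hq.2 ha hb hab⟩

theorem isHermitian_coe (A : selfAdjoint (Matrix n n 𝕜)) : (A : Matrix n n 𝕜).IsHermitian := A.2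

variable [Fintype m] [Fintype n] [DecidableEq m] [DecidableEq n]

theorem cfc_eq_conj_diagonal {A : Matrix n n 𝕜} (hA : A.IsHermitian) (f : ℝ → ℝ) :
    cfc f A = (hA.eigenvectorUnitary : Matrix n n 𝕜) *
      diagonal (fun i => (f (hA.eigenvalues i) : 𝕜)) *
      (hA.eigenvectorUnitary : Matrix n n 𝕜)ᴴ := by
  rw [hA.cfc_eq, Matrix.IsHermitian.cfc, Unitary.conjStarAlgAut_apply]
  rfl

open scoped MatrixOrder in
theorem posSemidef_cfc {A : Matrix n n 𝕜} (hA : A.PosSemidef) {f : ℝ → ℝ}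
    (hf : ∀ x, 0 ≤ x → 0 ≤ f x) : (cfc f A).PosSemidef :=
  (cfc_nonneg fun x hx => hf x (spectrum_nonneg_of_nonneg hA.nonneg hx)).posSemidef

theorem continuousOn_real_spectrum (A : Matrix n n 𝕜) (f : ℝ → ℝ) :
    ContinuousOn f (spectrum ℝ A) := A.finite_real_spectrum.continuousOn f

/-- The coordinates of `K` in the orthonormal eigenbases of the pair `p = (A, Y)`: entry `(j, k)` is
`⟨vⱼ, K uₖ⟩` for the chosen eigenvectors `uₖ` of `A` and `vⱼ` of `Y`. -/
noncomputable def spectralCoord (p : selfAdjoint (Matrix n n 𝕜) × selfAdjoint (Matrix m m 𝕜))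
    (K : Matrix m n 𝕜) : Matrix m n 𝕜 :=
  ((isHermitian_coe p.2).eigenvectorUnitary : Matrix m m 𝕜)ᴴ * K *
    ((isHermitian_coe p.1).eigenvectorUnitary : Matrix n n 𝕜)

/-- The sesquilinear form with spectral symbol `φ` in the eigenbases of `p = (A, Y)`: the sum over
eigenvalues `αₖ` of `A` and `yⱼ` of `Y` of `φ αₖ yⱼ` times the real part of the product of
`⟨vⱼ, K uₖ⟩` and the conjugate of `⟨vⱼ, W uₖ⟩`. For `φ α y = f α * g y` it is
`Re Tr K f(A) Wᴴ g(Y)`. -/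
noncomputable def spectralForm (φ : ℝ → ℝ → ℝ) (K W : Matrix m n 𝕜)
    (p : selfAdjoint (Matrix n n 𝕜) × selfAdjoint (Matrix m m 𝕜)) : ℝ :=
  ∑ j, ∑ k, φ ((isHermitian_coe p.1).eigenvalues k) ((isHermitian_coe p.2).eigenvalues j) *
    RCLike.re (spectralCoord p K j k * star (spectralCoord p W j k))

theorem re_trace_mul_diagonal_mul_conjTranspose_mul_diagonal (M N : Matrix m n 𝕜)
    (f : n → ℝ) (g : m → ℝ) :
    RCLike.re (M * diagonal (fun k => (f k : 𝕜)) * Nᴴ * diagonal (fun j => (g j : 𝕜))).trace =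
      ∑ j, ∑ k, f k * g j * RCLike.re (M j k * star (N j k)) := by
  rw [Matrix.trace, map_sum]
  refine Finset.sum_congr rfl fun j _ => ?_
  rw [Matrix.diag_apply, Matrix.mul_diagonal, Matrix.mul_apply, Finset.sum_mul, map_sum]
  refine Finset.sum_congr rfl fun k _ => ?_
  rw [Matrix.mul_diagonal, conjTranspose_apply, ← RCLike.re_ofReal_mul]
  push_cast
  ring_nf

section SpectralForm

variable (K W : Matrix m n 𝕜)
  (p : selfAdjoint (Matrix n n 𝕜) × selfAdjoint (Matrix m m 𝕜))

theorem re_trace_mul_cfc_mul_conjTranspose_mul_cfc (f g : ℝ → ℝ) :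
    RCLike.re (K * cfc f (p.1 : Matrix n n 𝕜) * Wᴴ * cfc g (p.2 : Matrix m m 𝕜)).trace =
      spectralForm (fun a y => f a * g y) K W p := by
  rw [spectralForm, ← re_trace_mul_diagonal_mul_conjTranspose_mul_diagonal,
    cfc_eq_conj_diagonal (isHermitian_coe p.1), cfc_eq_conj_diagonal (isHermitian_coe p.2)]
  simp only [spectralCoord, conjTranspose_mul, conjTranspose_conjTranspose]
  simp only [← Matrix.mul_assoc]
  rw [Matrix.trace_mul_comm]
  simp only [← Matrix.mul_assoc]

theorem spectralForm_add (φ ψ : ℝ → ℝ → ℝ) :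
    spectralForm (fun a y => φ a y + ψ a y) K W p =
      spectralForm φ K W p + spectralForm ψ K W p := by
  simp only [spectralForm, add_mul, Finset.sum_add_distrib]

theorem spectralForm_const_mul (c : ℝ) (φ : ℝ → ℝ → ℝ) :
    spectralForm (fun a y => c * φ a y) K W p = c * spectralForm φ K W p := by
  simp only [spectralForm, Finset.mul_sum, mul_assoc]

theorem spectralForm_linear (α β : ℝ) :
    spectralForm (fun a y => α * a + β * y) K W p =
      α * RCLike.re (K * (p.1 : Matrix n n 𝕜) * Wᴴ).trace +
        β * RCLike.re (K * Wᴴ * (p.2 : Matrix m m 𝕜)).trace := by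
  have h₁ := re_trace_mul_cfc_mul_conjTranspose_mul_cfc K W p (fun a => a) fun _ => 1
  have h₂ := re_trace_mul_cfc_mul_conjTranspose_mul_cfc K W p (fun _ => 1) fun y => y
  rw [cfc_id' ℝ _ (isHermitian_coe p.1).isSelfAdjoint,
    cfc_const_one ℝ _ (isHermitian_coe p.2).isSelfAdjoint] at h₁
  rw [cfc_id' ℝ _ (isHermitian_coe p.2).isSelfAdjoint,
    cfc_const_one ℝ _ (isHermitian_coe p.1).isSelfAdjoint] at h₂
  simp only [Matrix.mul_one, mul_one, one_mul] at h₁ h₂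
  rw [spectralForm_add, spectralForm_const_mul, spectralForm_const_mul, h₁, h₂]

end SpectralForm

theorem spectralForm_mono {φ ψ : ℝ → ℝ → ℝ} (h : ∀ a y, 0 ≤ a → 0 < y → φ a y ≤ ψ a y)
    (K : Matrix m n 𝕜) {p : selfAdjoint (Matrix n n 𝕜) × selfAdjoint (Matrix m m 𝕜)}
    (hp : p ∈ posPairs m n 𝕜) : spectralForm φ K K p ≤ spectralForm ψ K K p := by
  refine Finset.sum_le_sum fun j _ => Finset.sum_le_sum fun k _ => ?_
  refine mul_le_mul_of_nonneg_right (h _ _ (hp.1.eigenvalues_nonneg k) (hp.2.eigenvalues_pos j)) ?_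
  exact (RCLike.nonneg_iff.1 (mul_star_self_nonneg _)).1

theorem spectralForm_congr {φ ψ : ℝ → ℝ → ℝ} (h : ∀ a y, 0 ≤ a → 0 < y → φ a y = ψ a y)
    (K : Matrix m n 𝕜) {p : selfAdjoint (Matrix n n 𝕜) × selfAdjoint (Matrix m m 𝕜)}
    (hp : p ∈ posPairs m n 𝕜) : spectralForm φ K K p = spectralForm ψ K K p :=
  (spectralForm_mono (fun a y ha hy => (h a y ha hy).le) K hp).antisymm
    (spectralForm_mono (fun a y ha hy => (h a y ha hy).ge) K hp)

theorem convexOn_spectralForm_linear (α β : ℝ) (K W : Matrix m n 𝕜) :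
    ConvexOn ℝ (posPairs m n 𝕜) (spectralForm (fun a y => α * a + β * y) K W) := by
  refine ⟨convex_posPairs, fun p _ q _ a b _ _ _ => le_of_eq ?_⟩
  simp only [spectralForm_linear, Prod.fst_add, Prod.snd_add, Prod.smul_fst, Prod.smul_snd,
    AddSubgroup.coe_add, selfAdjoint.val_smul, Matrix.mul_add, Matrix.add_mul, Matrix.mul_smul,
    Matrix.smul_mul, trace_add, trace_smul, map_add, RCLike.smul_re, smul_eq_mul]
  ring

variable (m n 𝕜) in
/-- Operator joint convexity of a scalar function `φ` of two spectral variables: each diagonal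
quadratic form `spectralForm φ K K` is convex on `posPairs`. -/
def JointlyConvex (φ : ℝ → ℝ → ℝ) : Prop :=
  ∀ K : Matrix m n 𝕜, ConvexOn ℝ (posPairs m n 𝕜) (spectralForm φ K K)

namespace JointlyConvex

variable {φ ψ : ℝ → ℝ → ℝ}

theorem congr (hφ : JointlyConvex m n 𝕜 φ) (h : ∀ a y, 0 ≤ a → 0 < y → φ a y = ψ a y) :
    JointlyConvex m n 𝕜 ψ :=
  fun K => (hφ K).congr fun _ hp => spectralForm_congr h K hp

theorem add (hφ : JointlyConvex m n 𝕜 φ) (hψ : JointlyConvex m n 𝕜 ψ) :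
    JointlyConvex m n 𝕜 fun a y => φ a y + ψ a y :=
  fun K => ((hφ K).add (hψ K)).congr fun p _ => (spectralForm_add K K p φ ψ).symm

theorem const_mul (hφ : JointlyConvex m n 𝕜 φ) {c : ℝ} (hc : 0 ≤ c) :
    JointlyConvex m n 𝕜 fun a y => c * φ a y :=
  fun K => ((hφ K).smul hc).congr fun p _ => (spectralForm_const_mul K K p c φ).symm

theorem integral {α : Type*} [MeasurableSpace α] {μ : Measure α} {f : α → ℝ → ℝ → ℝ}
    (hf : ∀ᵐ t ∂μ, JointlyConvex m n 𝕜 (f t))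
    (hint : ∀ a y, 0 ≤ a → 0 < y → Integrable (fun t => f t a y) μ) :
    JointlyConvex m n 𝕜 fun a y => ∫ t, f t a y ∂μ := by
  intro K
  have hterm {p} (hp : p ∈ posPairs m n 𝕜) (j k) : Integrable (fun t =>
      f t ((isHermitian_coe p.1).eigenvalues k) ((isHermitian_coe p.2).eigenvalues j) *
        RCLike.re (spectralCoord p K j k * star (spectralCoord p K j k))) μ :=
    (hint _ _ (hp.1.eigenvalues_nonneg k) (hp.2.eigenvalues_pos j)).mul_const _
  have hform {p} (hp : p ∈ posPairs m n 𝕜) : Integrable (fun t => spectralForm (f t) K K p) μ :=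
    integrable_finsetSum _ fun j _ => integrable_finsetSum _ fun k _ => hterm hp j k
  have hswap {p} (hp : p ∈ posPairs m n 𝕜) :
      ∫ t, spectralForm (f t) K K p ∂μ = spectralForm (fun a y => ∫ t, f t a y ∂μ) K K p := by
    simp only [spectralForm]
    rw [integral_finsetSum _ fun j _ => integrable_finsetSum _ fun k _ => hterm hp j k]
    refine Finset.sum_congr rfl fun j _ => ?_
    rw [integral_finsetSum _ fun k _ => hterm hp j k]
    exact Finset.sum_congr rfl fun k _ => integral_mul_const _ _
  have hconv : ConvexOn ℝ (posPairs m n 𝕜) fun p => ∫ t, spectralForm (f t) K K p ∂μ :=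
    integral_convexOn_of_integrand_ae convex_posPairs (hf.mono fun t ht => ht K) fun p hp =>
      hform hp
  exact hconv.congr fun p hp => hswap hp

end JointlyConvex

theorem jointlyConvex_linear (α β : ℝ) : JointlyConvex m n 𝕜 fun a y => α * a + β * y :=
  fun K => convexOn_spectralForm_linear α β K K

theorem spectralCoord_surjective (p : selfAdjoint (Matrix n n 𝕜) × selfAdjoint (Matrix m m 𝕜)) :
    Function.Surjective (spectralCoord p) := by
  intro N
  let U : Matrix n n 𝕜 := (isHermitian_coe p.1).eigenvectorUnitary
  let V : Matrix m m 𝕜 := (isHermitian_coe p.2).eigenvectorUnitary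
  have hU : Uᴴ * U = 1 := Unitary.coe_star_mul_self (isHermitian_coe p.1).eigenvectorUnitary
  have hV : Vᴴ * V = 1 := Unitary.coe_star_mul_self (isHermitian_coe p.2).eigenvectorUnitary
  refine ⟨V * N * Uᴴ, ?_⟩
  calc Vᴴ * (V * N * Uᴴ) * U = Vᴴ * V * N * (Uᴴ * U) := by simp only [Matrix.mul_assoc]
    _ = N := by rw [hU, hV, Matrix.one_mul, Matrix.mul_one]

theorem sq_div_mul_re_sub_eq_mul_normSq (z w : 𝕜) (a : ℝ) {c : ℝ} (hc : 0 < c) :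
    a ^ 2 / c * RCLike.re (z * star z) -
        (2 * a * RCLike.re (z * star w) - c * RCLike.re (w * star w)) =
      c * RCLike.normSq (((a / c : ℝ) : 𝕜) * z - w) := by
  simp only [RCLike.normSq_apply, RCLike.star_def, RCLike.mul_re, RCLike.mul_im, RCLike.conj_re,
    RCLike.conj_im, map_sub, RCLike.ofReal_re, RCLike.ofReal_im]
  field_simp
  ring

theorem spectralForm_sq_div_sub_eq_sum_normSq {r s : ℝ} (hr : 0 ≤ r) (hs : 0 < s)
    (K W : Matrix m n 𝕜) {p : selfAdjoint (Matrix n n 𝕜) × selfAdjoint (Matrix m m 𝕜)}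
    (hp : p ∈ posPairs m n 𝕜) :
    spectralForm (fun a y => a ^ 2 / (r * a + s * y)) K K p -
        (spectralForm (fun a y => 2 * a + 0 * y) K W p +
          spectralForm (fun a y => -r * a + -s * y) W W p) =
      ∑ j, ∑ k,
        (r * (isHermitian_coe p.1).eigenvalues k + s * (isHermitian_coe p.2).eigenvalues j) *
          RCLike.normSq ((((isHermitian_coe p.1).eigenvalues k /
            (r * (isHermitian_coe p.1).eigenvalues k +
              s * (isHermitian_coe p.2).eigenvalues j) : ℝ) : 𝕜) *
            spectralCoord p K j k - spectralCoord p W j k) := by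
  simp only [spectralForm, ← Finset.sum_add_distrib, ← Finset.sum_sub_distrib]
  refine Finset.sum_congr rfl fun j _ => Finset.sum_congr rfl fun k _ => ?_
  have hα := hp.1.eigenvalues_nonneg k
  have hy := hp.2.eigenvalues_pos j
  rw [← sq_div_mul_re_sub_eq_mul_normSq _ _ _ (by positivity)]
  ring

theorem jointlyConvex_sq_div {r s : ℝ} (hr : 0 ≤ r) (hs : 0 < s) :
    JointlyConvex m n 𝕜 fun a y => a ^ 2 / (r * a + s * y) := by
  refine fun K => convexOn_of_forall_exists_support convex_posPairs fun p hp => ?_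
  obtain ⟨W, hW⟩ := spectralCoord_surjective p (Matrix.of fun j k =>
    (((isHermitian_coe p.1).eigenvalues k / (r * (isHermitian_coe p.1).eigenvalues k +
      s * (isHermitian_coe p.2).eigenvalues j) : ℝ) : 𝕜) * spectralCoord p K j k)
  refine ⟨fun q => spectralForm (fun a y => 2 * a + 0 * y) K W q +
    spectralForm (fun a y => -r * a + -s * y) W W q, (convexOn_spectralForm_linear _ _ K W).add
      (convexOn_spectralForm_linear _ _ W W), fun q hq => ?_, ?_⟩
  · rw [← sub_nonneg, spectralForm_sq_div_sub_eq_sum_normSq hr hs K W hq]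
    refine Finset.sum_nonneg fun j _ => Finset.sum_nonneg fun k _ => ?_
    have hα := hq.1.eigenvalues_nonneg k
    have hy := hq.2.eigenvalues_pos j
    exact mul_nonneg (by positivity) (RCLike.normSq_nonneg _)
  · refine (sub_eq_zero.1 ((spectralForm_sq_div_sub_eq_sum_normSq hr hs K W hp).trans ?_)).symm
    simp only [hW, Matrix.of_apply, sub_self, map_zero, mul_zero, Finset.sum_const_zero]

theorem JointlyConvex.mul_rpow_div {q : ℝ} (hq : q ∈ Ioo 0 1) {c : ℝ → ℝ → ℝ}
    (hc : ∀ t, 0 < t → JointlyConvex m n 𝕜 fun a y => c a y * (a / (a + t * y))) :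
    JointlyConvex m n 𝕜 fun a y => c a y * (a / y) ^ q := by
  set C := (∫ t in Ioi 0, Real.rpowIntegrand₀₁ q t 1)⁻¹
  have hC : 0 < C := inv_pos.2 (Real.integral_rpowIntegrand₀₁_one_pos hq)
  have hslice : ∀ᵐ t ∂volume.restrict (Ioi (0 : ℝ)),
      JointlyConvex m n 𝕜 fun a y => c a y * Real.rpowIntegrand₀₁ q t (a / y) :=
    ae_restrict_of_forall_mem measurableSet_Ioi fun t (ht : 0 < t) =>
      ((hc t ht).const_mul (Real.rpow_nonneg ht.le (q - 1))).congr fun a y ha hy => by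
        rw [Real.rpowIntegrand₀₁_eq_pow_div hq ht.le (div_nonneg ha hy.le)]
        field_simp
        ring
  have hint : ∀ a y, 0 ≤ a → 0 < y →
      IntegrableOn (fun t => c a y * Real.rpowIntegrand₀₁ q t (a / y)) (Ioi 0) := fun a y ha hy =>
    (Real.integrableOn_rpowIntegrand₀₁_Ioi hq (div_nonneg ha hy.le)).const_mul _
  refine ((JointlyConvex.integral hslice hint).const_mul hC.le).congr fun a y ha hy => ?_
  rw [integral_const_mul, Real.rpow_eq_const_mul_integral hq (div_nonneg ha hy.le)]
  ring

theorem mul_rpow_div_eq {a y : ℝ} (ha : 0 ≤ a) (hy : 0 < y) (p : ℝ) :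
    y * (a / y) ^ p = a ^ p * y ^ (1 - p) := by
  rw [Real.div_rpow ha hy.le, Real.rpow_sub hy, Real.rpow_one]
  ring

theorem jointlyConvex_neg_mul_rpow_div {p : ℝ} (hp : p ∈ Ioo 0 1) :
    JointlyConvex m n 𝕜 fun a y => -y * (a / y) ^ p :=
  .mul_rpow_div hp fun t ht =>
    (((jointlyConvex_sq_div zero_le_one ht).const_mul (inv_nonneg.2 ht.le)).add
      (jointlyConvex_linear (-t⁻¹) 0)).congr fun a y ha hy => by
        have : 0 < 1 * a + t * y := by positivity
        field_simp
        ring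

theorem jointlyConvex_mul_rpow_div {q : ℝ} (hq : q ∈ Ioc 0 1) :
    JointlyConvex m n 𝕜 fun a y => a * (a / y) ^ q := by
  obtain rfl | hq' := eq_or_lt_of_le hq.2
  · refine (jointlyConvex_sq_div le_rfl one_pos).congr fun a y _ _ => ?_
    simp only [zero_mul, zero_add, one_mul, Real.rpow_one]
    ring
  · refine .mul_rpow_div ⟨hq.1, hq'⟩ fun t ht => ?_
    refine (jointlyConvex_sq_div zero_le_one ht).congr fun a y _ _ => ?_
    rw [one_mul, sq, mul_div_assoc]

theorem jointlyConvex_rpow_mul_rpow {p : ℝ} (hp : p ∈ Ioo 0 1 ∪ Ioc 1 2) :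
    JointlyConvex m n 𝕜 fun a y => (p * (p - 1))⁻¹ * (a ^ p * y ^ (1 - p)) := by
  rcases hp with hp | hp
  · have hc : 0 ≤ (p * (1 - p))⁻¹ := inv_nonneg.2 (mul_nonneg hp.1.le (sub_nonneg.2 hp.2.le))
    refine ((jointlyConvex_neg_mul_rpow_div hp).const_mul hc).congr fun a y ha hy => ?_
    rw [neg_mul, mul_rpow_div_eq ha hy, mul_neg, ← neg_mul, ← inv_neg, ← mul_neg, neg_sub]
  · have hp₀ : 0 < p := one_pos.trans hp.1
    have hc : 0 ≤ (p * (p - 1))⁻¹ := inv_nonneg.2 (mul_nonneg hp₀.le (sub_nonneg.2 hp.1.le))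
    have hq : p - 1 ∈ Ioc 0 1 := ⟨sub_pos.2 hp.1, by linarith [hp.2]⟩
    refine ((jointlyConvex_mul_rpow_div hq).const_mul hc).congr fun a y ha hy => ?_
    obtain rfl | ha := ha.eq_or_lt
    · rw [Real.zero_rpow hp₀.ne', zero_mul, zero_mul]
    · rw [← mul_rpow_div_eq ha.le hy, Real.rpow_sub_one (div_pos ha hy).ne']
      field_simp

theorem convexOn_re_trace_rpow_mul_rpow {p : ℝ} (hp : p ∈ Ioo 0 1 ∪ Ioc 1 2) (K : Matrix m n 𝕜) :
    ConvexOn ℝ ({A : Matrix n n 𝕜 | A.PosSemidef} ×ˢ {Y : Matrix m m 𝕜 | Y.PosDef}) fun P =>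
      (p * (p - 1))⁻¹ * RCLike.re (K * cfc (fun x : ℝ => x ^ p) P.1 * Kᴴ *
        cfc (fun x : ℝ => x ^ (1 - p)) P.2).trace := by
  refine ⟨convex_setOf_posSemidef.prod convex_setOf_posDef,
    fun P hP Q hQ s t hs ht hst => ?_⟩
  have h := (jointlyConvex_rpow_mul_rpow hp K).2
    (x := (⟨P.1, hP.1.isHermitian⟩, ⟨P.2, hP.2.isHermitian⟩)) ⟨hP.1, hP.2⟩
    (y := (⟨Q.1, hQ.1.isHermitian⟩, ⟨Q.2, hQ.2.isHermitian⟩)) ⟨hQ.1, hQ.2⟩ hs ht hst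
  simp only [spectralForm_const_mul, ← re_trace_mul_cfc_mul_conjTranspose_mul_cfc] at h
  exact h

theorem re_trace_cfc {A : Matrix n n 𝕜} (hA : A.IsHermitian) (f : ℝ → ℝ) :
    RCLike.re (cfc f A).trace = ∑ i, f (hA.eigenvalues i) := by
  rw [cfc_eq_conj_diagonal hA, Matrix.trace_mul_comm, ← Matrix.mul_assoc, ← star_eq_conjTranspose,
    Unitary.coe_star_mul_self, Matrix.one_mul, trace_diagonal, map_sum]
  simp only [RCLike.ofReal_re]

theorem div_sub_one_le_rpow_mul_rpow_add {a u y : ℝ} (ha₀ : 0 < a) (ha₁ : a ≠ 1) (hu : 0 ≤ u)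
    (hy : 0 < y) : u / (a - 1) ≤ (a * (a - 1))⁻¹ * (u ^ a * y ^ (1 - a)) + a⁻¹ * y := by
  have hr : -1 ≤ u / y - 1 := by linarith [div_nonneg hu hy.le]
  rw [← mul_rpow_div_eq hu hy]
  suffices 0 ≤ (a * (a - 1))⁻¹ * ((u / y) ^ a - (1 + a * (u / y - 1))) by
    have hsub : a - 1 ≠ 0 := sub_ne_zero.2 ha₁
    have hdiff : (a * (a - 1))⁻¹ * (y * (u / y) ^ a) + a⁻¹ * y - u / (a - 1) =
        y * ((a * (a - 1))⁻¹ * ((u / y) ^ a - (1 + a * (u / y - 1)))) := by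
      field_simp
      ring
    exact sub_nonneg.1 (hdiff ▸ mul_nonneg hy.le this)
  obtain ha₁ | ha₁ := lt_or_gt_of_ne ha₁
  · have hbern := rpow_one_add_le_one_add_mul_self hr ha₀.le ha₁.le
    rw [add_sub_cancel] at hbern
    exact mul_nonneg_of_nonpos_of_nonpos (inv_nonpos.2 (by nlinarith)) (sub_nonpos.2 hbern)
  · have hbern := one_add_mul_self_le_rpow_one_add hr ha₁.le
    rw [add_sub_cancel] at hbern
    exact mul_nonneg (inv_nonneg.2 (by nlinarith)) (sub_nonneg.2 hbern)

theorem rpow_mul_add_rpow_le {a u ε : ℝ} (ha₀ : 0 < a) (ha₁ : a ≠ 1) (hu : 0 ≤ u) (hε : 0 < ε) :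
    (a * (a - 1))⁻¹ * (u ^ a * (u + ε) ^ (1 - a)) + a⁻¹ * (u + ε) ≤
      u / (a - 1) + a⁻¹ * ε := by
  suffices (a * (a - 1))⁻¹ * (u ^ a * (u + ε) ^ (1 - a)) ≤ (a * (a - 1))⁻¹ * u by
    have hsub : a - 1 ≠ 0 := sub_ne_zero.2 ha₁
    have hsplit : u / (a - 1) = (a * (a - 1))⁻¹ * u + a⁻¹ * u := by
      field_simp
      ring
    linarith
  obtain rfl | hu := hu.eq_or_lt
  · rw [Real.zero_rpow ha₀.ne', zero_mul]
  have hsplit : u ^ a * u ^ (1 - a) = u := by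
    rw [← Real.rpow_add hu, add_sub_cancel, Real.rpow_one]
  have hle : u ≤ u + ε := le_add_of_nonneg_right hε.le
  obtain ha₁ | ha₁ := lt_or_gt_of_ne ha₁
  · refine mul_le_mul_of_nonpos_left ?_ (inv_nonpos.2 (by nlinarith))
    calc u = u ^ a * u ^ (1 - a) := hsplit.symm
      _ ≤ u ^ a * (u + ε) ^ (1 - a) := by gcongr
  · refine mul_le_mul_of_nonneg_left ?_ (inv_nonneg.2 (by nlinarith))
    calc u ^ a * (u + ε) ^ (1 - a) ≤ u ^ a * u ^ (1 - a) := by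
          gcongr 1
          exact Real.rpow_le_rpow_of_nonpos hu hle (by linarith)
      _ = u := hsplit

/-- The objective `Tr X Y ^ (1 - a) / (a (a - 1)) + Tr Y / a` whose infimum over positive definite
`Y` is `Tr X ^ (1 / a) / (a - 1)`. Normalised by `a - 1`, it is to be minimised whether `a < 1` or
`1 < a`. -/
noncomputable def youngFunctional (a : ℝ) (X Y : Matrix n n 𝕜) : ℝ :=
  (a * (a - 1))⁻¹ * RCLike.re (X * cfc (fun y : ℝ => y ^ (1 - a)) Y).trace +
    a⁻¹ * RCLike.re Y.trace

theorem re_trace_cfc_rpow_le_youngFunctional {a : ℝ} (ha₀ : 0 < a) (ha₁ : a ≠ 1)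
    {X Y : Matrix n n 𝕜} (hX : X.PosSemidef) (hY : Y.PosDef) :
    RCLike.re (cfc (fun x : ℝ => x ^ (1 / a)) X).trace / (a - 1) ≤ youngFunctional a X Y := by
  let p : selfAdjoint (Matrix n n 𝕜) × selfAdjoint (Matrix n n 𝕜) :=
    (⟨X, hX.isHermitian⟩, ⟨Y, hY.isHermitian⟩)
  have hpow : RCLike.re (cfc (fun x : ℝ => x ^ (1 / a)) X).trace =
      spectralForm (fun x _ => x ^ (1 / a) * 1) 1 1 p := by
    rw [← re_trace_mul_cfc_mul_conjTranspose_mul_cfc 1 1 p _ fun _ => 1,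
      cfc_const_one ℝ Y hY.isHermitian.isSelfAdjoint]
    simp only [p, conjTranspose_one, Matrix.one_mul, Matrix.mul_one]
  have hmul : RCLike.re (X * cfc (fun y : ℝ => y ^ (1 - a)) Y).trace =
      spectralForm (fun x y => x * y ^ (1 - a)) 1 1 p := by
    rw [← re_trace_mul_cfc_mul_conjTranspose_mul_cfc 1 1 p fun x => x,
      cfc_id' ℝ X hX.isHermitian.isSelfAdjoint]
    simp only [p, conjTranspose_one, Matrix.one_mul, Matrix.mul_one]
  have hlin : RCLike.re Y.trace = spectralForm (fun x y => 0 * x + 1 * y) 1 1 p := by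
    rw [spectralForm_linear]
    simp only [p, conjTranspose_one, zero_mul, zero_add, one_mul]
  rw [youngFunctional, div_eq_inv_mul, hpow, hmul, hlin, ← spectralForm_const_mul,
    ← spectralForm_const_mul, ← spectralForm_const_mul, ← spectralForm_add]
  refine spectralForm_mono (fun x y hx hy => ?_) 1 ⟨hX, hY⟩
  have := div_sub_one_le_rpow_mul_rpow_add ha₀ ha₁ (Real.rpow_nonneg hx (1 / a)) hy
  simpa only [one_div, Real.rpow_inv_rpow hx ha₀.ne', div_eq_inv_mul, mul_one, zero_mul, zero_add,
    one_mul] using this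

theorem youngFunctional_cfc_rpow_add_le {a ε : ℝ} (ha₀ : 0 < a) (ha₁ : a ≠ 1) (hε : 0 < ε)
    {X : Matrix n n 𝕜} (hX : X.PosSemidef) :
    youngFunctional a X (cfc (fun x : ℝ => x ^ (1 / a) + ε) X) ≤
      RCLike.re (cfc (fun x : ℝ => x ^ (1 / a)) X).trace / (a - 1) +
        Fintype.card n * (a⁻¹ * ε) := by
  have hcont := continuousOn_real_spectrum X
  have hmul : X * cfc (fun y : ℝ => y ^ (1 - a)) (cfc (fun x : ℝ => x ^ (1 / a) + ε) X) =
      cfc (fun x : ℝ => x * (x ^ (1 / a) + ε) ^ (1 - a)) X := by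
    rw [← cfc_comp' _ _ X (((X.finite_real_spectrum).image _).continuousOn _) (hcont _)
      hX.isHermitian.isSelfAdjoint, cfc_mul _ _ X (hcont _) (hcont _),
      cfc_id' ℝ X hX.isHermitian.isSelfAdjoint]
  rw [youngFunctional, hmul, re_trace_cfc hX.isHermitian, re_trace_cfc hX.isHermitian,
    re_trace_cfc hX.isHermitian, Finset.mul_sum, Finset.mul_sum, ← Finset.sum_add_distrib,
    Finset.sum_div, ← nsmul_eq_mul, ← Finset.card_univ, ← Finset.sum_const,
    ← Finset.sum_add_distrib]
  refine Finset.sum_le_sum fun i _ => ?_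
  have hx := hX.eigenvalues_nonneg i
  have := rpow_mul_add_rpow_le ha₀ ha₁ (Real.rpow_nonneg hx (1 / a)) hε
  simpa only [one_div, Real.rpow_inv_rpow hx ha₀.ne'] using this

theorem posDef_cfc_add_const {A : Matrix n n 𝕜} (hA : A.PosSemidef) {f : ℝ → ℝ}
    (hf : ∀ x, 0 ≤ x → 0 ≤ f x) {ε : ℝ} (hε : 0 < ε) : (cfc (fun x => f x + ε) A).PosDef := by
  rw [cfc_add_const ε f A (continuousOn_real_spectrum A f) hA.isHermitian.isSelfAdjoint,
    Algebra.algebraMap_eq_smul_one]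
  exact (PosDef.one.smul hε).posSemidef_add (posSemidef_cfc hA hf)

theorem isGLB_youngFunctional {a : ℝ} (ha₀ : 0 < a) (ha₁ : a ≠ 1) {X : Matrix n n 𝕜}
    (hX : X.PosSemidef) : IsGLB (youngFunctional a X '' {Y | Y.PosDef})
      (RCLike.re (cfc (fun x : ℝ => x ^ (1 / a)) X).trace / (a - 1)) := by
  refine ⟨forall_mem_image.2 fun Y hY => re_trace_cfc_rpow_le_youngFunctional ha₀ ha₁ hX hY,
    fun c hc => ?_⟩
  set v := RCLike.re (cfc (fun x : ℝ => x ^ (1 / a)) X).trace / (a - 1)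
  have hlim : Tendsto (fun ε => v + Fintype.card n * (a⁻¹ * ε)) (𝓝[>] 0) (𝓝 v) := by
    have : Continuous fun ε => v + Fintype.card n * (a⁻¹ * ε) := by fun_prop
    simpa using (this.tendsto 0).mono_left nhdsWithin_le_nhds
  refine ge_of_tendsto hlim (eventually_mem_nhdsWithin.mono fun ε hε => ?_)
  have hY := posDef_cfc_add_const hX (fun x hx => Real.rpow_nonneg hx (1 / a)) hε
  exact (hc (mem_image_of_mem _ hY)).trans (youngFunctional_cfc_rpow_add_le ha₀ ha₁ hε hX)

theorem convexOn_youngFunctional_sum {ι : Type*} [Fintype ι] (K : ι → Matrix m n 𝕜) {a : ℝ}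
    (ha : a ∈ Ioo 0 1 ∪ Ioc 1 2) :
    ConvexOn ℝ ({A : Matrix n n 𝕜 | A.PosSemidef} ×ˢ {Y : Matrix m m 𝕜 | Y.PosDef}) fun P =>
      youngFunctional a (∑ i, K i * cfc (fun x : ℝ => x ^ a) P.1 * (K i)ᴴ) P.2 := by
  have hconvex := convex_setOf_posSemidef (n := n) (𝕜 := 𝕜) |>.prod
    (convex_setOf_posDef (n := m) (𝕜 := 𝕜))
  have htrace : ConvexOn ℝ ({A : Matrix n n 𝕜 | A.PosSemidef} ×ˢ {Y : Matrix m m 𝕜 | Y.PosDef})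
      fun P => a⁻¹ * RCLike.re P.2.trace :=
    ⟨hconvex, fun P _ Q _ s t _ _ _ => le_of_eq <| by
      simp only [Prod.snd_add, Prod.smul_snd, trace_add, trace_smul, map_add, RCLike.smul_re,
        smul_eq_mul]
      ring⟩
  refine ((convexOn_sum Finset.univ hconvex fun i _ =>
    convexOn_re_trace_rpow_mul_rpow ha (K i)).add htrace).congr fun P _ => ?_
  simp only [youngFunctional, Finset.sum_mul, trace_sum, map_sum, Finset.mul_sum, Pi.add_apply]

theorem stmt_8_general {ι : Type*} [Fintype ι] (K : ι → Matrix m n 𝕜) {a : ℝ}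
    (ha : a ∈ Ioo (0 : ℝ) 1 ∪ Ioc (1 : ℝ) 2) :
    ConvexOn ℝ {A : Matrix n n 𝕜 | A.PosSemidef} fun A =>
      (RCLike.re (cfc (fun x : ℝ => x ^ (1 / a))
        (∑ i, K i * cfc (fun x : ℝ => x ^ a) A * (K i)ᴴ)).trace - 1) / (a - 1) := by
  have ha₀ : 0 < a := ha.elim (fun h => h.1) fun h => one_pos.trans h.1
  have ha₁ : a ≠ 1 := ha.elim (fun h => h.2.ne) fun h => h.1.ne'
  have hglb (A : Matrix n n 𝕜) (hA : A.PosSemidef) := isGLB_youngFunctional ha₀ ha₁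
    (posSemidef_sum Finset.univ fun i _ => (posSemidef_cfc hA fun x hx =>
      Real.rpow_nonneg hx a).mul_mul_conjTranspose_same (K i))
  have hconv : ConvexOn ℝ {A : Matrix n n 𝕜 | A.PosSemidef} fun A =>
      RCLike.re (cfc (fun x : ℝ => x ^ (1 / a))
        (∑ i, K i * cfc (fun x : ℝ => x ^ a) A * (K i)ᴴ)).trace / (a - 1) :=
    convexOn_of_isGLB convex_setOf_posSemidef (convexOn_youngFunctional_sum K ha) hglb
  refine (hconv.add_const (-(1 / (a - 1)))).congr fun A _ => ?_
  rw [Pi.add_apply, sub_div, ← sub_eq_add_neg]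

/-- For a CPTP map `E` and `a ∈ (0,1) ∪ (1,2]`, the closed-form resource measure
`ρ ↦ (Tr((E(ρ^a))^(1/a)) - 1)/(a - 1)` is convex on positive definite density
matrices. -/
theorem stmt_8 {d : ℕ}
    (E : Matrix (Fin d) (Fin d) ℂ →ₗ[ℂ] Matrix (Fin d) (Fin d) ℂ)
    (hKraus : ∃ (n : ℕ) (K : Fin n → Matrix (Fin d) (Fin d) ℂ),
      (∀ X, E X = ∑ i, K i * X * (K i)ᴴ) ∧ ∑ i, (K i)ᴴ * K i = 1)
    (a : ℝ) (ha : a ∈ Set.Ioo (0 : ℝ) 1 ∪ Set.Ioc (1 : ℝ) 2) :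
    ∀ ρ₁ ρ₂ : Matrix (Fin d) (Fin d) ℂ, ρ₁.PosDef → ρ₁.trace = 1 →
      ρ₂.PosDef → ρ₂.trace = 1 → ∀ t : ℝ, t ∈ Set.Icc (0 : ℝ) 1 →
      (((mpow (E (mpow ((t : ℂ) • ρ₁ + ((1 - t : ℝ) : ℂ) • ρ₂) a)) (1 / a)).trace).re - 1)
          / (a - 1)
        ≤ t * ((((mpow (E (mpow ρ₁ a)) (1 / a)).trace).re - 1) / (a - 1))
          + (1 - t) * ((((mpow (E (mpow ρ₂ a)) (1 / a)).trace).re - 1) / (a - 1)) := by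
  obtain ⟨n, K, hE, -⟩ := hKraus
  intro ρ₁ ρ₂ h₁ _ h₂ _ t ht
  have hconv := (stmt_8_general K ha).2 h₁.posSemidef h₂.posSemidef ht.1 (sub_nonneg.2 ht.2)
    (add_sub_cancel t 1)
  simpa only [mpow, hE, Complex.coe_smul, smul_eq_mul, RCLike.re_to_complex] using hconv
end
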